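/- arXiv:0911.3038 — 5 statements merged into one kernel-verified Lean document; each statement's English description precedes it below -/
import Mathlib

section
/- For every base b ≥ 2, there are only finitely many Munchausen numbers in base b; that is, the set {n ∈ ℕ : n = P_b(n)} is finite. -/
/-- Digit power sum: `P b n = Σ cᵢ^cᵢ` over the base-`b` digits of `n`, with `0^0 = 1`. -/
def P (b n : ℕ) : ℕ := ((Nat.digits b n).map (fun c => c ^ c)).sum

/-!
For a fixed base, only the values of the summand `f` at the finitely many digits matter, so a sum of
`f` over the digits of `n` is at most a constant times the number of digits. That number grows like
`log n`, so the sum is eventually smaller than `n`.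
-/

open Asymptotics Filter

theorem isLittleO_natLog_natCast (b : ℕ) :
    (fun n : ℕ ↦ (Nat.log b n : ℝ)) =o[atTop] fun n ↦ (n : ℝ) := by
  have h_log : (fun n : ℕ ↦ Real.log n / Real.log b) =o[atTop] fun n ↦ (n : ℝ) := by
    simpa only [div_eq_inv_mul, Function.comp_def, id_eq] using
      (Real.isLittleO_log_id_atTop.comp_tendsto tendsto_natCast_atTop_atTop).const_mul_left _
  refine (IsBigO.of_norm_le fun n ↦ ?_).trans_isLittleO h_log
  calc ‖(Nat.log b n : ℝ)‖ = Nat.log b n := Real.norm_natCast _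
    _ ≤ Real.log n / Real.log b := Real.natLog_le_logb n b

theorem isLittleO_length_digits_natCast {b : ℕ} (hb : 1 < b) :
    (fun n ↦ ((Nat.digits b n).length : ℝ)) =o[atTop] fun n ↦ (n : ℝ) := by
  have h_one : (fun _ : ℕ ↦ (1 : ℝ)) =o[atTop] fun n ↦ (n : ℝ) :=
    (isLittleO_const_id_atTop 1).comp_tendsto tendsto_natCast_atTop_atTop
  refine ((isLittleO_natLog_natCast b).add h_one).congr' ?_ .rfl
  filter_upwards [eventually_ne_atTop 0] with n hn
  rw [Nat.length_digits b n hb hn, Nat.cast_add_one]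

theorem sum_map_digits_le_length_nsmul {M : Type*} [AddMonoid M] [Preorder M] [AddLeftMono M]
    [AddRightMono M] {b : ℕ} (hb : 1 < b) {f : ℕ → M} {C : M} (hf : ∀ d < b, f d ≤ C) (n : ℕ) :
    ((Nat.digits b n).map f).sum ≤ (Nat.digits b n).length • C := by
  rw [← List.length_map (f := f)]
  exact List.sum_le_card_nsmul _ _ <|
    List.forall_mem_map.2 fun d hd ↦ hf d (Nat.digits_lt_base hb hd)

theorem eventually_sum_map_digits_lt {b : ℕ} (hb : 1 < b) (f : ℕ → ℝ) :
    ∀ᶠ n : ℕ in atTop, ((Nat.digits b n).map f).sum < n := by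
  obtain ⟨C, hC⟩ : ∃ C, ∀ d < b, f d ≤ C := by
    simpa only [bddAbove_def, Set.forall_mem_image, Set.mem_Iio] using
      ((Set.finite_Iio b).image f).bddAbove
  have h_bound := ((isLittleO_length_digits_natCast hb).const_mul_left C).def one_half_pos
  filter_upwards [h_bound, eventually_gt_atTop 0] with n hn hn_pos
  calc ((Nat.digits b n).map f).sum
    _ ≤ (Nat.digits b n).length * C := by
      simpa only [nsmul_eq_mul] using sum_map_digits_le_length_nsmul hb hC n
    _ = C * (Nat.digits b n).length := mul_comm _ _
    _ ≤ 1 / 2 * n := by simpa only [Real.norm_natCast] using (Real.le_norm_self _).trans hn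
    _ < n := mul_lt_of_lt_one_left (Nat.cast_pos.2 hn_pos) one_half_lt_one

theorem munchausen_finite_general {b : ℕ} (hb : 1 < b) (f : ℕ → ℝ) :
    {n : ℕ | n ≤ ((Nat.digits b n).map f).sum}.Finite := by
  simpa only [← Nat.cofinite_eq_atTop, eventually_cofinite, not_lt] using
    eventually_sum_map_digits_lt hb f

theorem munchausen_finite (b : ℕ) (hb : 2 ≤ b) :
    {n : ℕ | n = P b n}.Finite := by
  refine (munchausen_finite_general hb fun c ↦ (c ^ c : ℕ)).subset fun n hn ↦ ?_
  simpa [P, Function.comp_def] using (congrArg (Nat.cast (R := ℝ)) hn).le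
end

section
/- For every base b ≥ 2, every Munchausen number n in base b satisfies n ≤ 2·b^b. -/
/-!
Each digit contributes at most `(b - 1) ^ (b - 1)` to `P b n`, so a number with `l + 1` digits and
`n ≤ P b n` satisfies `b ^ l ≤ n ≤ (l + 1) * (b - 1) ^ (b - 1)`. The left side grows at least as
fast in `l` as the right side and is already larger at `l = b`, so `n` has at most `b` digits.
-/

theorem pow_self_mono : Monotone fun c : ℕ => c ^ c := by
  refine monotone_nat_of_le_succ fun c => ?_
  calc c ^ c ≤ (c + 1) ^ c := Nat.pow_le_pow_left c.le_succ c
    _ ≤ (c + 1) ^ (c + 1) := Nat.pow_le_pow_right c.succ_pos c.le_succ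

theorem P_le_length_digits_mul_pow {b : ℕ} (hb : 1 < b) (n : ℕ) :
    P b n ≤ (Nat.digits b n).length * (b - 1) ^ (b - 1) := by
  have digit_pow_le : ∀ x ∈ (Nat.digits b n).map (fun c => c ^ c), x ≤ (b - 1) ^ (b - 1) := by
    simp only [List.forall_mem_map]
    exact fun c hc => pow_self_mono (Nat.le_sub_one_of_lt (Nat.digits_lt_base hb hc))
  simpa only [P, List.length_map, smul_eq_mul] using List.sum_le_card_nsmul _ _ digit_pow_le

theorem add_two_mul_pow_self_lt_pow_succ {m : ℕ} (hm : m ≠ 0) :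
    (m + 2) * m ^ m < (m + 1) ^ (m + 1) := by
  obtain ⟨a, rfl⟩ := Nat.exists_eq_add_one_of_ne_zero hm
  calc (a + 1 + 2) * (a + 1) ^ (a + 1) = (a + 3) * (a + 1) * (a + 1) ^ a := by ring
    _ ≤ (a + 3) * (a + 1) * (a + 2) ^ a := by gcongr; omega
    _ < (a + 2) ^ 2 * (a + 2) ^ a := by gcongr; linarith
    _ = (a + 1 + 1) ^ (a + 1 + 1) := by ring

theorem succ_mul_lt_pow_of_le {b c k l : ℕ} (hb : 2 ≤ b) (hkl : k ≤ l)
    (hk : (k + 1) * c < b ^ k) : (l + 1) * c < b ^ l := by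
  induction l, hkl using Nat.le_induction with
  | base => exact hk
  | succ l _ ih =>
    calc (l + 1 + 1) * c ≤ (2 * (l + 1)) * c := by gcongr; omega
      _ ≤ b * ((l + 1) * c) := by rw [mul_assoc]; gcongr
      _ < b * b ^ l := by gcongr
      _ = b ^ (l + 1) := (pow_succ' b l).symm

theorem succ_mul_pred_pow_pred_lt_pow {b l : ℕ} (hb : 2 ≤ b) (hl : b ≤ l) :
    (l + 1) * (b - 1) ^ (b - 1) < b ^ l := by
  refine succ_mul_lt_pow_of_le hb hl ?_
  obtain ⟨m, rfl⟩ := Nat.exists_eq_add_of_le' (show 1 ≤ b by omega)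
  exact add_two_mul_pow_self_lt_pow_succ (by omega)

theorem munchausen_le_general {b n : ℕ} (hb : 2 ≤ b) (hn : n ≤ P b n) : n < b ^ b := by
  rw [← Nat.digits_length_le_iff hb]
  by_contra! many_digits
  obtain ⟨l, length_eq⟩ := Nat.exists_eq_add_one_of_ne_zero (Nat.ne_zero_of_lt many_digits)
  have pow_le : b ^ l ≤ n := (Nat.lt_digits_length_iff hb n).1 (by omega)
  have P_le : P b n ≤ (l + 1) * (b - 1) ^ (b - 1) := length_eq ▸ P_le_length_digits_mul_pow hb n
  exact (pow_le.trans (hn.trans P_le)).not_gt (succ_mul_pred_pow_pred_lt_pow hb (by omega))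

theorem munchausen_le (b n : ℕ) (hb : 2 ≤ b) (hn : n = P b n) :
    n ≤ 2 * b ^ b := by
  have := munchausen_le_general hb hn.le
  omega
end

section
/- The positive Munchausen numbers in base 2 are exactly 1 and 2; that is, for n ≥ 1, n = P_2(n) if and only if n = 1 or n = 2. -/
/-!
Both binary digits satisfy `c ^ c = 1`, so `P 2 n` merely counts the binary digits of `n`. A number
`k + 1` has `k + 1` binary digits exactly when `2 ^ k ≤ k + 1 < 2 ^ (k + 1)`; the upper bound always
holds, and the lower one only for `k ≤ 1`.
-/

theorem pow_self_eq_one_of_lt_two {c : ℕ} (hc : c < 2) : c ^ c = 1 := by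
  interval_cases c <;> rfl

theorem P_two_eq_length_digits (n : ℕ) : P 2 n = (Nat.digits 2 n).length := by
  have h_digit : ∀ c ∈ Nat.digits 2 n, c ^ c = 1 := fun c hc =>
    pow_self_eq_one_of_lt_two (Nat.digits_lt_base one_lt_two hc)
  simp [P, List.map_congr_left h_digit]

theorem P_two_eq_log_add_one {n : ℕ} (hn : n ≠ 0) : P 2 n = Nat.log 2 n + 1 := by
  rw [P_two_eq_length_digits, Nat.length_digits 2 n one_lt_two hn]

theorem add_one_lt_two_pow {k : ℕ} (hk : 2 ≤ k) : k + 1 < 2 ^ k := by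
  obtain ⟨m, rfl⟩ := Nat.exists_eq_add_of_le' hk
  calc m + 2 + 1 < 2 * (m + 2) := by omega
    _ ≤ 2 * 2 ^ (m + 1) := Nat.mul_le_mul_left 2 Nat.lt_two_pow_self
    _ = 2 ^ (m + 2) := (pow_succ' 2 (m + 1)).symm

theorem two_pow_le_add_one_iff {k : ℕ} : 2 ^ k ≤ k + 1 ↔ k ≤ 1 := by
  refine ⟨fun h => ?_, fun hk => by interval_cases k <;> rfl⟩
  contrapose! h
  exact add_one_lt_two_pow h

theorem munchausen_base2 (n : ℕ) (hn : 1 ≤ n) :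
    n = P 2 n ↔ n = 1 ∨ n = 2 := by
  obtain ⟨k, rfl⟩ := Nat.exists_eq_add_of_le' hn
  calc k + 1 = P 2 (k + 1)
    _ ↔ Nat.log 2 (k + 1) = k := by
      rw [P_two_eq_log_add_one k.succ_ne_zero, Nat.add_right_cancel_iff, eq_comm]
    _ ↔ 2 ^ k ≤ k + 1 ∧ k + 1 < 2 ^ (k + 1) := Nat.log_eq_iff (by simp)
    _ ↔ 2 ^ k ≤ k + 1 := and_iff_left Nat.lt_two_pow_self
    _ ↔ k ≤ 1 := two_pow_le_add_one_iff
    _ ↔ k + 1 = 1 ∨ k + 1 = 2 := by omega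
end

section
/- The positive Munchausen numbers in base 3 are exactly 1, 5 and 8; that is, for n ≥ 1, n = P_3(n) if and only if n ∈ {1, 5, 8}. -/
theorem add_one_mul_sub_one_pow_lt_pow {b k : ℕ} (hb : 1 < b) (hk : b ≤ k) :
    (k + 1) * (b - 1) ^ (b - 1) < b ^ k := by
  induction k, hk using Nat.le_induction with
  | base =>
    obtain ⟨c, rfl⟩ := Nat.exists_eq_add_of_le' hb
    calc (c + 2 + 1) * (c + 1) ^ (c + 1) = (c + 3) * (c + 1) * (c + 1) ^ c := by ring
      _ < (c + 2) ^ 2 * (c + 2) ^ c :=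
        Nat.mul_lt_mul_of_lt_of_le (by nlinarith) (Nat.pow_le_pow_left (by lia) c) (by positivity)
      _ = (c + 2) ^ (c + 2) := by ring
  | succ k _ ih =>
    calc (k + 1 + 1) * (b - 1) ^ (b - 1) ≤ 2 * (k + 1) * (b - 1) ^ (b - 1) := by gcongr; lia
      _ = (k + 1) * (b - 1) ^ (b - 1) * 2 := by ring
      _ < b ^ k * b := Nat.mul_lt_mul_of_lt_of_le ih hb (by lia)
      _ = b ^ (k + 1) := (pow_succ b k).symm

theorem P_lt_of_pow_self_le {b n : ℕ} (hb : 1 < b) (hn : b ^ b ≤ n) : P b n < n := by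
  have n_ne_zero : n ≠ 0 := (Nat.pow_self_pos.trans_le hn).ne'
  calc P b n ≤ (Nat.digits b n).length * (b - 1) ^ (b - 1) := P_le_length_digits_mul_pow hb n
    _ = (Nat.log b n + 1) * (b - 1) ^ (b - 1) := by rw [Nat.length_digits b n hb n_ne_zero]
    _ < b ^ Nat.log b n := add_one_mul_sub_one_pow_lt_pow hb (Nat.le_log_of_pow_le hb hn)
    _ ≤ n := Nat.pow_log_le_self b n_ne_zero

theorem munchausen_base3 (n : ℕ) (hn : 1 ≤ n) :
    n = P 3 n ↔ n ∈ ({1, 5, 8} : Set ℕ) := by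
  rcases lt_or_ge n (3 ^ 3) with n_lt | n_ge
  · interval_cases n <;> simp [P]
  · have P_lt : P 3 n < n := P_lt_of_pow_self_le (by norm_num) n_ge
    simp only [Set.mem_insert_iff, Set.mem_singleton_iff]
    lia
end

section
/- The only positive Munchausen number in base 5 is 1; that is, for n ≥ 1, n = P_5(n) if and only if n = 1. -/
/-- A Munchausen number in base `b`: a fixed point of the digit power sum. Since `0` has no digits,
it counts as a Munchausen number in every base. -/
def IsMunchausen (b n : ℕ) : Prop := n = P b n

section

variable {b n : ℕ}

theorem P_le_length_digits_mul (hb : 1 < b) :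
    P b n ≤ (b.digits n).length * (b - 1) ^ (b - 1) := by
  have digit_pow_le : ∀ x ∈ (b.digits n).map (fun c => c ^ c), x ≤ (b - 1) ^ (b - 1) := by
    simp only [List.forall_mem_map]
    exact fun c hc => Nat.pow_self_mono (Nat.le_sub_one_of_lt (Nat.digits_lt_base hb hc))
  simpa only [P, List.length_map, smul_eq_mul] using List.sum_le_card_nsmul _ _ digit_pow_le

theorem succ_mul_sub_one_pow_lt (hb : 1 < b) : (b + 1) * (b - 1) ^ (b - 1) < b ^ b := by
  obtain ⟨k, rfl⟩ : ∃ k, b = k + 2 := Nat.exists_eq_add_of_le' hb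
  calc (k + 2 + 1) * (k + 1) ^ (k + 1) = ((k + 3) * (k + 1)) * (k + 1) ^ k := by ring
    _ < (k + 2) ^ 2 * (k + 1) ^ k := by gcongr; linarith
    _ ≤ (k + 2) ^ 2 * (k + 2) ^ k := by gcongr; omega
    _ = (k + 2) ^ (k + 2) := by ring

theorem succ_mul_sub_one_pow_lt_pow (hb : 1 < b) {m : ℕ} (hm : b ≤ m) :
    (m + 1) * (b - 1) ^ (b - 1) < b ^ m := by
  induction m, hm using Nat.le_induction with
  | base => exact succ_mul_sub_one_pow_lt hb
  | succ m _ ih =>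
    calc (m + 1 + 1) * (b - 1) ^ (b - 1) ≤ (2 * (m + 1)) * (b - 1) ^ (b - 1) := by gcongr; omega
      _ = 2 * ((m + 1) * (b - 1) ^ (b - 1)) := mul_assoc _ _ _
      _ < 2 * b ^ m := by gcongr
      _ ≤ b * b ^ m := by gcongr; exact hb
      _ = b ^ (m + 1) := (pow_succ' b m).symm

namespace IsMunchausen

theorem length_digits_le (h : IsMunchausen b n) (hb : 1 < b) : (b.digits n).length ≤ b := by
  by_contra! hlt
  obtain ⟨m, hm⟩ : ∃ m, (b.digits n).length = m + 1 := Nat.exists_eq_add_one_of_ne_zero (by omega)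
  have pow_le : b ^ m ≤ n := (Nat.lt_digits_length_iff hb n).mp (by omega)
  have le_mul : n ≤ (m + 1) * (b - 1) ^ (b - 1) := hm ▸ h.trans_le (P_le_length_digits_mul hb)
  exact (pow_le.trans le_mul).not_gt (succ_mul_sub_one_pow_lt_pow hb (by omega))

theorem le_mul_sub_one_pow (h : IsMunchausen b n) (hb : 1 < b) : n ≤ b * (b - 1) ^ (b - 1) :=
  calc n = P b n := h
    _ ≤ (b.digits n).length * (b - 1) ^ (b - 1) := P_le_length_digits_mul hb
    _ ≤ b * (b - 1) ^ (b - 1) := by gcongr; exact h.length_digits_le hb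

end IsMunchausen

end

theorem eq_one_of_mem_Icc_of_eq_P_five : ∀ n ∈ Finset.Icc 1 1280, n = P 5 n → n = 1 := by
  decide +kernel

theorem munchausen_base5 (n : ℕ) (hn : 1 ≤ n) :
    n = P 5 n ↔ n = 1 := by
  constructor
  · intro h
    have n_le : n ≤ 5 * 4 ^ 4 := IsMunchausen.le_mul_sub_one_pow h (by norm_num)
    exact eq_one_of_mem_Icc_of_eq_P_five n (Finset.mem_Icc.mpr ⟨hn, n_le⟩) h
  · rintro rfl
    simp [P]
end
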